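/- Correspondence between the primal and dual space fundamental solution Hessians (Theorem that Λ = Ξ(Θ)): Let M be a symmetric invertible n×n real matrix and let Q be a symmetric 2n×2n real matrix with blocks Q¹¹, Q¹², Q²¹ = (Q¹²)ᵀ, Q²² such that both Q¹¹ − M and Q²² − M are positive definite. Define Ŝ(x,z) = (1/2)[x;z]ᵀQ[x;z], and let Θ and Λ be the symmetric 2n×2n Hessians determined by the identities −sup_{x∈ℝⁿ}{ (1/2)(x−y)ᵀM(x−y) − Ŝ(x,z) } = (1/2)[y;z]ᵀΘ[y;z] and −sup_{z∈ℝⁿ}{ (1/2)(z−y)ᵀM(z−y) − Ŝ(x,z) } = (1/2)[x;y]ᵀΛ[x;y]. Then Λ = Ξ(Θ), where Ξ = Π⁻¹ ∘ Γ; equivalently, Γ(Θ) = Π(Λ) = Q. -/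

import Mathlib

open Matrix

/-- The operation `Γ` on symmetric `2n×2n` matrices `Ω` (with `M + Ω¹¹` invertible):
blocks `M − M(M+Ω¹¹)⁻¹M`, `M(M+Ω¹¹)⁻¹Ω¹²`, `Ω²¹(M+Ω¹¹)⁻¹M`, `Ω²² − Ω²¹(M+Ω¹¹)⁻¹Ω¹²`. -/
noncomputable def GamOp {n : ℕ} (M : Matrix (Fin n) (Fin n) ℝ)
    (Ω : Matrix (Fin n ⊕ Fin n) (Fin n ⊕ Fin n) ℝ) :
    Matrix (Fin n ⊕ Fin n) (Fin n ⊕ Fin n) ℝ :=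
  fromBlocks
    (M - M * (M + Ω.toBlocks₁₁)⁻¹ * M)
    (M * (M + Ω.toBlocks₁₁)⁻¹ * Ω.toBlocks₁₂)
    (Ω.toBlocks₂₁ * (M + Ω.toBlocks₁₁)⁻¹ * M)
    (Ω.toBlocks₂₂ - Ω.toBlocks₂₁ * (M + Ω.toBlocks₁₁)⁻¹ * Ω.toBlocks₁₂)

/-- The block-swap operation `Δ`. -/
def DeltOp {n : ℕ} (Ω : Matrix (Fin n ⊕ Fin n) (Fin n ⊕ Fin n) ℝ) :
    Matrix (Fin n ⊕ Fin n) (Fin n ⊕ Fin n) ℝ :=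
  fromBlocks Ω.toBlocks₂₂ Ω.toBlocks₂₁ Ω.toBlocks₁₂ Ω.toBlocks₁₁

/-- The operation `Π = Δ ∘ Γ ∘ Δ`. -/
noncomputable def PiOp {n : ℕ} (M : Matrix (Fin n) (Fin n) ℝ)
    (Ω : Matrix (Fin n ⊕ Fin n) (Fin n ⊕ Fin n) ℝ) :
    Matrix (Fin n ⊕ Fin n) (Fin n ⊕ Fin n) ℝ :=
  DeltOp (GamOp M (DeltOp Ω))

/-- The operation `Π⁻¹(Ω) = −Π(−Ω)`. -/
noncomputable def PiInvOp {n : ℕ} (M : Matrix (Fin n) (Fin n) ℝ)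
    (Ω : Matrix (Fin n ⊕ Fin n) (Fin n ⊕ Fin n) ℝ) :
    Matrix (Fin n ⊕ Fin n) (Fin n ⊕ Fin n) ℝ :=
  -(PiOp M (-Ω))

/-- The operation `Ξ = Π⁻¹ ∘ Γ`. -/
noncomputable def XiOp {n : ℕ} (M : Matrix (Fin n) (Fin n) ℝ)
    (Ω : Matrix (Fin n ⊕ Fin n) (Fin n ⊕ Fin n) ℝ) :
    Matrix (Fin n ⊕ Fin n) (Fin n ⊕ Fin n) ℝ :=
  PiInvOp M (GamOp M Ω)

/-!
With the two remaining variables treated as a single block, each supremum minimises a quadratic form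
over its first block; completing the square leaves the form of a Schur complement. When `x` is
eliminated this Schur complement is `Γ⁻¹(Q) = -Γ(-Q)`, and when `z` is eliminated it is, by the
block swap `Δ`, `Π⁻¹(Q)`. A symmetric matrix is determined by its quadratic form, so `Θ = Γ⁻¹(Q)`
and `Λ = Π⁻¹(Q)`. Hence `Γ(Θ) = Q = Π(Λ)` and `Λ = Π⁻¹(Γ(Θ)) = Ξ(Θ)`.
-/

theorem transpose_toBlocks₁₂_of_isSymm {l m R : Type*} {Ω : Matrix (l ⊕ m) (l ⊕ m) R}
    (hΩ : Ω.IsSymm) : Ω.toBlocks₁₂ᵀ = Ω.toBlocks₂₁ :=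
  ext fun i j => hΩ.apply (Sum.inr i) (Sum.inl j)

section QuadraticForms

variable {l m : Type*} [Fintype l] [Fintype m]

theorem eq_of_forall_dotProduct_mulVec_self_eq {R : Type*} [Field R] [NeZero (2 : R)]
    {A B : Matrix m m R} (hA : A.IsSymm) (hB : B.IsSymm)
    (h : ∀ v, v ⬝ᵥ A *ᵥ v = v ⬝ᵥ B *ᵥ v) : A = B := by
  classical
  refine Matrix.toBilin'.injective (LinearMap.BilinForm.ext_of_isSymm
    (isSymm_toBilin'_iff_isSymm.2 hA) (isSymm_toBilin'_iff_isSymm.2 hB) fun v => ?_)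
  simpa only [toBilin'_apply'] using h v

theorem eq_of_forall_sumElim_dotProduct_mulVec_eq {R : Type*} [Field R] [NeZero (2 : R)]
    {A B : Matrix (l ⊕ m) (l ⊕ m) R} (hA : A.IsSymm) (hB : B.IsSymm)
    (h : ∀ x y, Sum.elim x y ⬝ᵥ A *ᵥ Sum.elim x y = Sum.elim x y ⬝ᵥ B *ᵥ Sum.elim x y) :
    A = B :=
  eq_of_forall_dotProduct_mulVec_self_eq hA hB fun v => by
    simpa only [Sum.elim_comp_inl_inr] using h (v ∘ Sum.inl) (v ∘ Sum.inr)

theorem isLeast_range_dotProduct_fromBlocks_mulVec [DecidableEq l] {A : Matrix l l ℝ}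
    (hA : A.PosDef) (B : Matrix l m ℝ) (D : Matrix m m ℝ) (v : m → ℝ) :
    IsLeast (Set.range fun x => Sum.elim x v ⬝ᵥ fromBlocks A B Bᵀ D *ᵥ Sum.elim x v)
      (v ⬝ᵥ (D - Bᵀ * A⁻¹ * B) *ᵥ v) := by
  let _ := hA.isUnit.invertible
  have complete_square (x : l → ℝ) :
      Sum.elim x v ⬝ᵥ fromBlocks A B Bᵀ D *ᵥ Sum.elim x v =
        (x + (A⁻¹ * B) *ᵥ v) ⬝ᵥ A *ᵥ (x + (A⁻¹ * B) *ᵥ v) +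
          v ⬝ᵥ (D - Bᵀ * A⁻¹ * B) *ᵥ v := by
    simpa only [star_trivial, conjTranspose_eq_transpose_of_trivial, dotProduct_mulVec]
      using schur_complement_eq₁₁ B D x v hA.isHermitian
  simp only [complete_square]
  refine ⟨⟨-((A⁻¹ * B) *ᵥ v), by simp⟩, ?_⟩
  rintro _ ⟨x, rfl⟩
  exact le_add_of_nonneg_left (hA.posSemidef.dotProduct_mulVec_nonneg (x + (A⁻¹ * B) *ᵥ v))

theorem sub_dotProduct_mulVec_sub_sub_fromBlocks {R : Type*} [CommRing R]
    {M : Matrix l l R} (hM : M.IsSymm)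
    (A : Matrix l l R) (B : Matrix l m R) (C : Matrix m m R) (x y : l → R) (z : m → R) :
    (x - y) ⬝ᵥ M *ᵥ (x - y) - Sum.elim x z ⬝ᵥ fromBlocks A B Bᵀ C *ᵥ Sum.elim x z =
      -(Sum.elim x (Sum.elim y z) ⬝ᵥ
        fromBlocks (A - M) (fromCols M B) (fromCols M B)ᵀ (fromBlocks (-M) 0 0 C) *ᵥ
          Sum.elim x (Sum.elim y z)) := by
  simp only [fromBlocks_mulVec, transpose_fromCols, fromRows_mulVec, fromCols_mulVec,
    Sum.elim_comp_inl, Sum.elim_comp_inr, sumElim_dotProduct_sumElim, hM.eq, mulVec_sub, sub_mulVec,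
    neg_mulVec, zero_mulVec, dotProduct_add, dotProduct_sub, dotProduct_neg, sub_dotProduct,
    add_zero, zero_add, Sum.elim_add_add]
  ring

theorem neg_iSup_eq_half_schur_complement [DecidableEq l] {M A : Matrix l l ℝ} (hM : M.IsSymm)
    (hAM : (A - M).PosDef) (B : Matrix l m ℝ) (C : Matrix m m ℝ) (y : l → ℝ) (z : m → ℝ) :
    -(⨆ x : l → ℝ, (1 / 2) * ((x - y) ⬝ᵥ M *ᵥ (x - y)) -
        (1 / 2) * (Sum.elim x z ⬝ᵥ fromBlocks A B Bᵀ C *ᵥ Sum.elim x z)) =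
      (1 / 2) * (Sum.elim y z ⬝ᵥ
        (fromBlocks (-M) 0 0 C - (fromCols M B)ᵀ * (A - M)⁻¹ * fromCols M B) *ᵥ
          Sum.elim y z) := by
  have antitone_half_neg : Antitone fun t : ℝ => (1 / 2) * -t :=
    monotone_id.neg.const_mul (by norm_num)
  have hgreatest := antitone_half_neg.map_isLeast <| isLeast_range_dotProduct_fromBlocks_mulVec hAM
    (fromCols M B) (fromBlocks (-M) 0 0 C) (Sum.elim y z)
  rw [← Set.range_comp] at hgreatest
  simp only [← mul_sub, sub_dotProduct_mulVec_sub_sub_fromBlocks hM]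
  exact (congrArg Neg.neg hgreatest.csSup_eq).trans (by ring)

end QuadraticForms

section BlockOperations

variable {n : ℕ} {M : Matrix (Fin n) (Fin n) ℝ} {Ω : Matrix (Fin n ⊕ Fin n) (Fin n ⊕ Fin n) ℝ}

/-- The operation `Γ⁻¹(Ω) = −Γ(−Ω)`, a right inverse of `Γ` when `M` and `M − Ω¹¹` are invertible.
It is the Hessian left after eliminating the first block variable, as `PiInvOp` is for the
second. -/
noncomputable def GamInvOp (M : Matrix (Fin n) (Fin n) ℝ)
    (Ω : Matrix (Fin n ⊕ Fin n) (Fin n ⊕ Fin n) ℝ) :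
    Matrix (Fin n ⊕ Fin n) (Fin n ⊕ Fin n) ℝ :=
  -GamOp M (-Ω)

theorem gamInvOp_eq_fromBlocks (M : Matrix (Fin n) (Fin n) ℝ)
    (Ω : Matrix (Fin n ⊕ Fin n) (Fin n ⊕ Fin n) ℝ) :
    GamInvOp M Ω = fromBlocks
      (M * (M - Ω.toBlocks₁₁)⁻¹ * M - M)
      (M * (M - Ω.toBlocks₁₁)⁻¹ * Ω.toBlocks₁₂)
      (Ω.toBlocks₂₁ * (M - Ω.toBlocks₁₁)⁻¹ * M)
      (Ω.toBlocks₂₂ + Ω.toBlocks₂₁ * (M - Ω.toBlocks₁₁)⁻¹ * Ω.toBlocks₁₂) := by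
  have toBlocks_neg : (-Ω).toBlocks₁₁ = -Ω.toBlocks₁₁ ∧ (-Ω).toBlocks₁₂ = -Ω.toBlocks₁₂ ∧
      (-Ω).toBlocks₂₁ = -Ω.toBlocks₂₁ ∧ (-Ω).toBlocks₂₂ = -Ω.toBlocks₂₂ := ⟨rfl, rfl, rfl, rfl⟩
  simp only [GamInvOp, GamOp, toBlocks_neg, fromBlocks_neg, Matrix.mul_neg, Matrix.neg_mul, neg_neg,
    neg_sub, ← sub_eq_add_neg]
  congr 1
  abel

theorem gamOp_gamInvOp (hM : IsUnit M) (hΩ : IsUnit (M - Ω.toBlocks₁₁)) :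
    GamOp M (GamInvOp M Ω) = Ω := by
  let _ := hM.invertible
  let _ := hΩ.invertible
  have hinv : (M + (GamInvOp M Ω).toBlocks₁₁)⁻¹ = M⁻¹ * (M - Ω.toBlocks₁₁) * M⁻¹ := by
    rw [gamInvOp_eq_fromBlocks, toBlocks_fromBlocks₁₁, add_sub_cancel, Matrix.mul_inv_rev,
      Matrix.mul_inv_rev, inv_inv_of_invertible, Matrix.mul_assoc]
  rw [GamOp, hinv, gamInvOp_eq_fromBlocks]
  simp only [toBlocks_fromBlocks₁₂, toBlocks_fromBlocks₂₁, toBlocks_fromBlocks₂₂, Matrix.mul_assoc,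
    mul_inv_cancel_left_of_invertible, inv_mul_cancel_left_of_invertible, inv_mul_of_invertible,
    Matrix.mul_one, sub_sub_cancel, add_sub_cancel_right, fromBlocks_toBlocks]

theorem isSymm_gamInvOp (hM : M.IsSymm) (hΩ : Ω.IsSymm) : (GamInvOp M Ω).IsSymm := by
  rw [← fromBlocks_toBlocks Ω, isSymm_fromBlocks_iff] at hΩ
  obtain ⟨h₁₁, h₁₂, h₂₁, h₂₂⟩ := hΩ
  rw [gamInvOp_eq_fromBlocks, isSymm_fromBlocks_iff]
  simp only [Matrix.IsSymm, transpose_sub, transpose_add, transpose_mul, (hM.sub h₁₁).inv.eq, hM.eq,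
    h₁₂, h₂₁, h₂₂.eq, Matrix.mul_assoc, and_self]

theorem schur_complement_eq_gamInvOp (hM : M.IsSymm) (hΩ : Ω.IsSymm)
    (hunit : IsUnit (M - Ω.toBlocks₁₁)) :
    fromBlocks (-M) 0 0 Ω.toBlocks₂₂ - (fromCols M Ω.toBlocks₁₂)ᵀ * (Ω.toBlocks₁₁ - M)⁻¹ *
      fromCols M Ω.toBlocks₁₂ = GamInvOp M Ω := by
  have hΩ₂₁ : Ω.toBlocks₁₂ᵀ = Ω.toBlocks₂₁ := transpose_toBlocks₁₂_of_isSymm hΩ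
  have hinv : (Ω.toBlocks₁₁ - M)⁻¹ = -(M - Ω.toBlocks₁₁)⁻¹ := by
    let _ := hunit.invertible
    refine inv_eq_right_inv ?_
    rw [← neg_sub M, neg_mul_neg, mul_inv_of_invertible]
  simp only [gamInvOp_eq_fromBlocks, hinv, transpose_fromCols, hM.eq, hΩ₂₁, Matrix.mul_neg,
    Matrix.neg_mul, sub_neg_eq_add, fromRows_mul, mul_fromCols,
    fromCols_fromRows_eq_fromBlocks, fromBlocks_add, zero_add, neg_add_eq_sub]

theorem deltOp_eq_submatrix (Ω : Matrix (Fin n ⊕ Fin n) (Fin n ⊕ Fin n) ℝ) :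
    DeltOp Ω = Ω.submatrix Sum.swap Sum.swap := by
  ext (i | i) (j | j) <;> rfl

theorem deltOp_deltOp (Ω : Matrix (Fin n ⊕ Fin n) (Fin n ⊕ Fin n) ℝ) :
    DeltOp (DeltOp Ω) = Ω := by
  simp only [deltOp_eq_submatrix, submatrix_submatrix, Sum.swap_swap_eq, submatrix_id_id]

theorem isSymm_deltOp (hΩ : Ω.IsSymm) : (DeltOp Ω).IsSymm :=
  deltOp_eq_submatrix Ω ▸ hΩ.submatrix Sum.swap

theorem sumElim_dotProduct_deltOp_mulVec (Ω : Matrix (Fin n ⊕ Fin n) (Fin n ⊕ Fin n) ℝ)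
    (x y : Fin n → ℝ) :
    Sum.elim x y ⬝ᵥ DeltOp Ω *ᵥ Sum.elim x y = Sum.elim y x ⬝ᵥ Ω *ᵥ Sum.elim y x := by
  let e := Equiv.sumComm (Fin n) (Fin n)
  have elim_swap : Sum.elim x y = Sum.elim y x ∘ e := by ext (i | i) <;> rfl
  have deltOp_eq : DeltOp Ω = Ω.submatrix e e := deltOp_eq_submatrix Ω
  rw [deltOp_eq, submatrix_mulVec_equiv, elim_swap, comp_equiv_dotProduct_comp_equiv,
    Function.comp_assoc, e.self_comp_symm, Function.comp_id]

theorem piInvOp_eq_deltOp_gamInvOp_deltOp (M : Matrix (Fin n) (Fin n) ℝ)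
    (Ω : Matrix (Fin n ⊕ Fin n) (Fin n ⊕ Fin n) ℝ) :
    PiInvOp M Ω = DeltOp (GamInvOp M (DeltOp Ω)) := by
  simp only [PiInvOp, PiOp, GamInvOp, deltOp_eq_submatrix, submatrix_neg, Pi.neg_apply]

theorem piOp_piInvOp (hM : IsUnit M) (hΩ : IsUnit (M - Ω.toBlocks₂₂)) :
    PiOp M (PiInvOp M Ω) = Ω := by
  have hΔ : GamOp M (GamInvOp M (DeltOp Ω)) = DeltOp Ω := gamOp_gamInvOp hM hΩ
  rw [piInvOp_eq_deltOp_gamInvOp_deltOp, PiOp, deltOp_deltOp, hΔ, deltOp_deltOp]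

theorem isSymm_piInvOp (hM : M.IsSymm) (hΩ : Ω.IsSymm) : (PiInvOp M Ω).IsSymm :=
  piInvOp_eq_deltOp_gamInvOp_deltOp M Ω ▸ isSymm_deltOp (isSymm_gamInvOp hM (isSymm_deltOp hΩ))

end BlockOperations

section PartialSuprema

variable {n : ℕ} {M : Matrix (Fin n) (Fin n) ℝ} {Q : Matrix (Fin n ⊕ Fin n) (Fin n ⊕ Fin n) ℝ}

theorem neg_iSup_eq_half_gamInvOp (hM : M.IsSymm) (hQ : Q.IsSymm)
    (hQM : (Q.toBlocks₁₁ - M).PosDef) (y z : Fin n → ℝ) :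
    -(⨆ x : Fin n → ℝ, (1 / 2) * ((x - y) ⬝ᵥ M *ᵥ (x - y)) -
        (1 / 2) * (Sum.elim x z ⬝ᵥ Q *ᵥ Sum.elim x z)) =
      (1 / 2) * (Sum.elim y z ⬝ᵥ GamInvOp M Q *ᵥ Sum.elim y z) := by
  have hQ_eq : Q = fromBlocks Q.toBlocks₁₁ Q.toBlocks₁₂ Q.toBlocks₁₂ᵀ Q.toBlocks₂₂ := by
    rw [transpose_toBlocks₁₂_of_isSymm hQ, fromBlocks_toBlocks]
  have hunit : IsUnit (M - Q.toBlocks₁₁) := IsUnit.sub_iff.mp hQM.isUnit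
  have hsup := neg_iSup_eq_half_schur_complement hM hQM Q.toBlocks₁₂ Q.toBlocks₂₂ y z
  rwa [← hQ_eq, schur_complement_eq_gamInvOp hM hQ hunit] at hsup

theorem neg_iSup_eq_half_piInvOp (hM : M.IsSymm) (hQ : Q.IsSymm)
    (hQM : (Q.toBlocks₂₂ - M).PosDef) (x y : Fin n → ℝ) :
    -(⨆ z : Fin n → ℝ, (1 / 2) * ((z - y) ⬝ᵥ M *ᵥ (z - y)) -
        (1 / 2) * (Sum.elim x z ⬝ᵥ Q *ᵥ Sum.elim x z)) =
      (1 / 2) * (Sum.elim x y ⬝ᵥ PiInvOp M Q *ᵥ Sum.elim x y) := by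
  simpa only [sumElim_dotProduct_deltOp_mulVec, piInvOp_eq_deltOp_gamInvOp_deltOp] using
    neg_iSup_eq_half_gamInvOp hM (isSymm_deltOp hQ) (Q := DeltOp Q) hQM y x

end PartialSuprema

/-- Correspondence between the primal and dual space fundamental solution Hessians:
`Λ = Ξ(Θ)`; equivalently `Γ(Θ) = Π(Λ) = Q`. -/
theorem primal_dual_hessian_correspondence {n : ℕ}
    (M : Matrix (Fin n) (Fin n) ℝ) (hMsymm : M.IsSymm) (hMinv : IsUnit M)
    (Q11 Q12 Q22 : Matrix (Fin n) (Fin n) ℝ)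
    (hQ11symm : Q11.IsSymm) (hQ22symm : Q22.IsSymm)
    (hQ11M : (Q11 - M).PosDef) (hQ22M : (Q22 - M).PosDef)
    (Θ Λ : Matrix (Fin n ⊕ Fin n) (Fin n ⊕ Fin n) ℝ)
    (hΘsymm : Θ.IsSymm) (hΛsymm : Λ.IsSymm)
    (hΘ : ∀ y z : Fin n → ℝ,
      -(⨆ x : Fin n → ℝ,
          (1 / 2) * ((x - y) ⬝ᵥ M *ᵥ (x - y)) -
            (1 / 2) * (Sum.elim x z ⬝ᵥ fromBlocks Q11 Q12 Q12ᵀ Q22 *ᵥ Sum.elim x z)) =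
        (1 / 2) * (Sum.elim y z ⬝ᵥ Θ *ᵥ Sum.elim y z))
    (hΛ : ∀ x y : Fin n → ℝ,
      -(⨆ z : Fin n → ℝ,
          (1 / 2) * ((z - y) ⬝ᵥ M *ᵥ (z - y)) -
            (1 / 2) * (Sum.elim x z ⬝ᵥ fromBlocks Q11 Q12 Q12ᵀ Q22 *ᵥ Sum.elim x z)) =
        (1 / 2) * (Sum.elim x y ⬝ᵥ Λ *ᵥ Sum.elim x y)) :
    Λ = XiOp M Θ ∧
      GamOp M Θ = fromBlocks Q11 Q12 Q12ᵀ Q22 ∧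
      PiOp M Λ = fromBlocks Q11 Q12 Q12ᵀ Q22 := by
  set Q := fromBlocks Q11 Q12 Q12ᵀ Q22
  have hQ : Q.IsSymm := hQ11symm.fromBlocks rfl hQ22symm
  have hΘ_eq : Θ = GamInvOp M Q :=
    eq_of_forall_sumElim_dotProduct_mulVec_eq hΘsymm (isSymm_gamInvOp hMsymm hQ) fun y z => by
      linarith [hΘ y z, neg_iSup_eq_half_gamInvOp hMsymm hQ hQ11M y z]
  have hΛ_eq : Λ = PiInvOp M Q :=
    eq_of_forall_sumElim_dotProduct_mulVec_eq hΛsymm (isSymm_piInvOp hMsymm hQ) fun x y => by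
      linarith [hΛ x y, neg_iSup_eq_half_piInvOp hMsymm hQ hQ22M x y]
  have gamOp_eq : GamOp M Θ = Q :=
    hΘ_eq ▸ gamOp_gamInvOp hMinv (IsUnit.sub_iff.mp hQ11M.isUnit)
  have piOp_eq : PiOp M Λ = Q :=
    hΛ_eq ▸ piOp_piInvOp hMinv (IsUnit.sub_iff.mp hQ22M.isUnit)
  exact ⟨by rw [XiOp, gamOp_eq, hΛ_eq], gamOp_eq, piOp_eq⟩
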